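/- arXiv:0902.4270 — 4 statements merged into one kernel-verified Lean document; each statement's English description precedes it below -/
import Mathlib

section
/- If char(F) = 0 or char(F) > 3, then any product of six words y_1 y_2 y_3 y_4 y_5 y_6 with y_1,…,y_6 ∈ M is equal to zero in A_{3,d}; in particular every word of length at least 6 is zero in A_{3,d}. -/
open FreeAlgebra MulOpposite

/-- The alphabet: `(k, false)` is the letter `x_{k+1}`, `(k, true)` is `x_{k+1}ᵀ`. -/
abbrev Ltr (d : ℕ) := Fin d × Bool

/-- The free (unital) associative algebra on the `2d` letters.  The free non-unital
algebra `M_F` sits inside it as the span of the nonempty words. -/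
abbrev FA (F : Type) [Field F] (d : ℕ) := FreeAlgebra F (Ltr d)

variable (F : Type) [Field F] (d : ℕ)

/-- The word in the free algebra corresponding to a list of letters
(the empty list gives `1`, the unit). -/
def wordOf (l : List (Ltr d)) : FA F d := (l.map (FreeAlgebra.ι F)).prod

/-- The transpose: the linear anti-automorphism with `x ↦ xᵀ`, `xᵀ ↦ x`. -/
def tp (a : FA F d) : FA F d :=
  ((FreeAlgebra.lift F fun p : Ltr d => op (FreeAlgebra.ι F (p.1, !p.2))) a).unop

/-- `ā = a - aᵀ`. -/
def bar (a : FA F d) : FA F d := a - tp F d a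

/-- `T(a,b,c) = a b̄ c̄ + b̄ aᵀ c̄ + b̄ c̄ a`. -/
def Trel (a b c : FA F d) : FA F d :=
  a * bar F d b * bar F d c + bar F d b * tp F d a * bar F d c + bar F d b * bar F d c * a

/-- The copy of the free non-unital algebra `M_F`, i.e. the span of the nonempty words. -/
def MFsub : Submodule F (FA F d) :=
  Submodule.span F {w | ∃ l : List (Ltr d), l ≠ [] ∧ w = wordOf F d l}

/-- The two-sided ideal such that `A_{3,d} = M_F / (idealA ∩ M_F)`: it is generated by
`a³` for `a ∈ M_F` together with `T(a,b,c)` for `a, b, c ∈ M_F`.  (Since all generators lie in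
`M_F`, its intersection with `M_F` is exactly the two-sided ideal of the non-unital algebra
`M_F` generated by these elements; in fact it is contained in `M_F`.)
An element `u ∈ M_F` is zero in `A_{3,d}` iff `u ∈ idealA F d`. -/
def idealA : TwoSidedIdeal (FA F d) :=
  TwoSidedIdeal.span
    ({x | ∃ a ∈ MFsub F d, x = a ^ 3} ∪
     {x | ∃ a ∈ MFsub F d, ∃ b ∈ MFsub F d, ∃ c ∈ MFsub F d, x = Trel F d a b c})

/-
Products of six elements already vanish modulo the cubes; this is the case of exponent three of the
Dubnov–Ivanov–Nagata–Higman theorem. Linearizing `a³ = 0` gives `x²z y² = 0`, hence `x²cdef = 0`.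
Further uses of the linearized identity move the square to each of the five positions in a product
of six factors, so such a product changes sign under every transposition of neighbours. Exchanging
neighbouring blocks in `(ab)(cd)(ef)` is an even permutation, so the full linearization of `a³ = 0`
at these blocks reads `6abcdef = 0`.
-/

/-- A ring, possibly without unit, in which every element has cube zero. The cube is spelled out
because a non-unital ring has no power operation with exponents in `ℕ`. -/
def IsNilThree (A : Type*) [Mul A] [Zero A] : Prop :=
  ∀ a : A, a * a * a = 0

theorem eq_neg_swap_of_apply_self_eq_zero {A C : Type*} [Add A] [AddGroup C] {f : A → A → C}
    (hadd : ∀ x y, f (x + y) (x + y) = f x x + f x y + (f y x + f y y)) (h : ∀ x, f x x = 0)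
    (x y : A) : f x y = -f y x := by
  have hxy := hadd x y
  rw [h, h, h, zero_add, add_zero] at hxy
  exact eq_neg_of_add_eq_zero_left hxy.symm

namespace IsNilThree

variable {A : Type*} [NonUnitalRing A] (hA : IsNilThree A)
include hA

theorem linearization_eq_zero (x y z : A) :
    x * y * z + x * z * y + y * x * z + y * z * x + z * x * y + z * y * x = 0 := by
  let cube (a : A) : A := a * a * a
  calc
    _ = cube (x + y + z) - cube (x + y) - cube (x + z) - cube (y + z) +
        cube x + cube y + cube z := by simp only [cube]; noncomm_ring
    _ = 0 := by simp only [cube, hA _, sub_zero, add_zero]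

theorem linearization_self_eq_zero (h2 : IsSMulRegular A 2) (x y : A) :
    x * x * y + x * y * x + y * x * x = 0 := by
  refine h2.right_eq_zero_of_smul ?_
  rw [← hA.linearization_eq_zero x x y]
  noncomm_ring

theorem op : IsNilThree Aᵐᵒᵖ := fun a =>
  MulOpposite.unop_injective <| (mul_assoc _ _ _).symm.trans (hA a.unop)

variable (h6 : IsSMulRegular A 6)
include h6

theorem sq_mul_mul_sq_eq_zero (x y z : A) : x * x * z * (y * y) = 0 := by
  have h2 : IsSMulRegular A 2 := IsSMulRegular.of_mul (a := 3) h6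
  have h3 : IsSMulRegular A 3 := IsSMulRegular.of_mul (a := 2) h6
  let P (u v : A) : A := u * u * v + u * v * u + v * u * u
  have hP (u v : A) : P u v = 0 := hA.linearization_self_eq_zero h2 u v
  refine h3.right_eq_zero_of_smul ?_
  calc
    3 • (x * x * z * (y * y)) = P x z * (y * y) + P x (z * y) * y + P x (z * (y * y)) -
        x * z * P y x - z * P y (x * x) := by simp only [P]; noncomm_ring
    _ = 0 := by simp only [hP, zero_mul, mul_zero, add_zero, sub_zero]

theorem sq_mul₄_eq_zero (x c d e f : A) : x * x * c * d * e * f = 0 := by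
  have swap (z u v : A) : x * x * z * (u * v) = -(x * x * z * (v * u)) :=
    eq_neg_swap_of_apply_self_eq_zero (f := fun u v => x * x * z * (u * v))
      (by intros; noncomm_ring) (hA.sq_mul_mul_sq_eq_zero h6 x · z) u v
  have hneg : x * x * c * d * e * f = -(x * x * c * d * e * f) := calc
    x * x * c * d * e * f = x * x * (c * d) * (e * f) := by noncomm_ring
    _ = -(x * x * c * (d * f) * e) := by rw [swap]; noncomm_ring
    _ = x * x * c * (f * (d * e)) := by rw [swap]; noncomm_ring
    _ = -(x * x * c * d * e * f) := by rw [swap]; noncomm_ring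
  have h2 : IsSMulRegular A 2 := IsSMulRegular.of_mul (a := 3) h6
  refine h2.right_eq_zero_of_smul ?_
  rwa [two_nsmul, ← eq_neg_iff_add_eq_zero]

theorem mul₄_sq_eq_zero (a b c d x : A) : a * b * c * d * x * x = 0 := by
  have h6op : IsSMulRegular Aᵐᵒᵖ 6 :=
    (MulOpposite.opEquiv.symm.isSMulRegular_congr fun _ => rfl).2 h6
  have h := hA.op.sq_mul₄_eq_zero h6op (.op x) (.op d) (.op c) (.op b) (.op a)
  simpa only [MulOpposite.unop_mul, MulOpposite.unop_op, MulOpposite.unop_zero, mul_assoc] using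
    congrArg MulOpposite.unop h

theorem mul₆_eq_neg_swap₁₂ (a b c d e f : A) :
    a * b * c * d * e * f = -(b * a * c * d * e * f) :=
  eq_neg_swap_of_apply_self_eq_zero (f := fun a b => a * b * c * d * e * f)
    (by intros; noncomm_ring) (hA.sq_mul₄_eq_zero h6 · c d e f) a b

theorem mul₆_eq_neg_swap₅₆ (a b c d e f : A) :
    a * b * c * d * e * f = -(a * b * c * d * f * e) :=
  eq_neg_swap_of_apply_self_eq_zero (f := fun e f => a * b * c * d * e * f)
    (by intros; noncomm_ring) (hA.mul₄_sq_eq_zero h6 a b c d) e f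

theorem mul₃_sq_mul_eq_zero (a b c x y : A) : a * b * c * x * x * y = 0 := by
  have h2 : IsSMulRegular A 2 := IsSMulRegular.of_mul (a := 3) h6
  have hmove : x * (a * b * c) * x * y = -(a * b * c * x * x * y) := by
    linear_combination (norm := noncomm_ring) hA.linearization_self_eq_zero h2 x (a * b * c) * y
      - hA.sq_mul₄_eq_zero h6 x a b c y
  have hsandwich : a * b * c * x * y * x = 0 := by
    linear_combination (norm := noncomm_ring) hA.linearization_eq_zero (a * b * c * x) x y - hmove
      - hA.mul₆_eq_neg_swap₁₂ h6 x y a b c x - hA.mul₄_sq_eq_zero h6 y a b c x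
  rw [hA.mul₆_eq_neg_swap₅₆ h6, hsandwich, neg_zero]

theorem mul_sq_mul₃_eq_zero (y x a b c : A) : y * x * x * a * b * c = 0 := by
  have hmove : y * x * x * a * b * c = -(a * b * c * x * x * y) := by
    linear_combination (norm := noncomm_ring) hA.linearization_eq_zero (a * b * c) (x * x) y
      - hA.mul₄_sq_eq_zero h6 a b c y x - hA.mul₄_sq_eq_zero h6 y a b c x
      - hA.sq_mul₄_eq_zero h6 x a b c y - hA.sq_mul₄_eq_zero h6 x y a b c
  rw [hmove, hA.mul₃_sq_mul_eq_zero h6, neg_zero]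

theorem mul₆_eq_neg_swap₂₃ (a b c d e f : A) :
    a * b * c * d * e * f = -(a * c * b * d * e * f) :=
  eq_neg_swap_of_apply_self_eq_zero (f := fun b c => a * b * c * d * e * f)
    (by intros; noncomm_ring) (hA.mul_sq_mul₃_eq_zero h6 a · d e f) b c

theorem mul₆_eq_neg_swap₄₅ (a b c d e f : A) :
    a * b * c * d * e * f = -(a * b * c * e * d * f) :=
  eq_neg_swap_of_apply_self_eq_zero (f := fun d e => a * b * c * d * e * f)
    (by intros; noncomm_ring) (hA.mul₃_sq_mul_eq_zero h6 a b c · f) d e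

theorem mul₂_sq_mul₂_eq_zero (a b x c d : A) : a * b * x * x * c * d = 0 := by
  have h2 : IsSMulRegular A 2 := IsSMulRegular.of_mul (a := 3) h6
  have hswap : x * a * b * x * c * d = a * b * x * x * c * d := by
    rw [hA.mul₆_eq_neg_swap₁₂ h6, hA.mul₆_eq_neg_swap₂₃ h6, neg_neg]
  refine h2.right_eq_zero_of_smul ?_
  linear_combination (norm := noncomm_ring) hA.linearization_self_eq_zero h2 x (a * b) * c * d
    - hA.sq_mul₄_eq_zero h6 x a b c d - hswap

theorem mul₆_eq_neg_swap₃₄ (a b c d e f : A) :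
    a * b * c * d * e * f = -(a * b * d * c * e * f) :=
  eq_neg_swap_of_apply_self_eq_zero (f := fun c d => a * b * c * d * e * f)
    (by intros; noncomm_ring) (hA.mul₂_sq_mul₂_eq_zero h6 a b · e f) c d

theorem mul₆_eq_zero (a b c d e f : A) : a * b * c * d * e * f = 0 := by
  have swap_left (a b c d e f : A) : a * b * (c * d) * (e * f) = c * d * (a * b) * (e * f) := by
    simp only [← mul_assoc]
    rw [hA.mul₆_eq_neg_swap₂₃ h6, hA.mul₆_eq_neg_swap₁₂ h6, hA.mul₆_eq_neg_swap₃₄ h6,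
      hA.mul₆_eq_neg_swap₂₃ h6]
    simp only [neg_neg]
  have swap_right (a b c d e f : A) : a * b * (c * d) * (e * f) = a * b * (e * f) * (c * d) := by
    simp only [← mul_assoc]
    rw [hA.mul₆_eq_neg_swap₄₅ h6, hA.mul₆_eq_neg_swap₃₄ h6, hA.mul₆_eq_neg_swap₅₆ h6,
      hA.mul₆_eq_neg_swap₄₅ h6]
    simp only [neg_neg]
  have hxzy : a * b * (e * f) * (c * d) = a * b * (c * d) * (e * f) := swap_right a b e f c d
  have hyxz : c * d * (a * b) * (e * f) = a * b * (c * d) * (e * f) := swap_left c d a b e f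
  have hyzx : c * d * (e * f) * (a * b) = a * b * (c * d) * (e * f) :=
    (swap_right c d e f a b).trans hyxz
  have hzxy : e * f * (a * b) * (c * d) = a * b * (c * d) * (e * f) :=
    (swap_left e f a b c d).trans hxzy
  have hzyx : e * f * (c * d) * (a * b) = a * b * (c * d) * (e * f) :=
    (swap_right e f c d a b).trans hzxy
  have hsum := hA.linearization_eq_zero (a * b) (c * d) (e * f)
  rw [hxzy, hyxz, hyzx, hzxy, hzyx] at hsum
  refine h6.right_eq_zero_of_smul ?_
  rw [← hsum]
  noncomm_ring

end IsNilThree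

theorem prod_ofFn_six_mem_of_cube_mem {B : Type*} [Ring B] (h6 : IsUnit (6 : B))
    (S : NonUnitalSubring B) (I : TwoSidedIdeal B) (hI : ∀ a ∈ S, a ^ 3 ∈ I)
    (y : Fin 6 → B) (hy : ∀ i, y i ∈ S) : (List.ofFn y).prod ∈ I := by
  let π : B →+* I.ringCon.Quotient := I.ringCon.mk'
  have hπ (x : B) : π x = 0 ↔ x ∈ I := by
    rw [← TwoSidedIdeal.mem_ker, TwoSidedIdeal.ker_ringCon_mk']
  have hnil : IsNilThree (S.map π) := by
    rintro ⟨_, a, ha, rfl⟩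
    refine Subtype.ext ?_
    change π a * π a * π a = 0
    rw [← pow_three', ← map_pow, hπ]
    exact hI a ha
  have h6π : IsSMulRegular (S.map π) 6 := by
    refine .of_right_eq_zero_of_smul fun q hq => Subtype.ext ?_
    have hq : (6 : I.ringCon.Quotient) * q = 0 := by
      simpa [nsmul_eq_mul] using congrArg Subtype.val hq
    exact ((map_ofNat π 6 ▸ h6.map π).mul_right_eq_zero).1 hq
  let z (i : Fin 6) : S.map π := ⟨π (y i), y i, hy i, rfl⟩
  have hz := congrArg Subtype.val (hnil.mul₆_eq_zero h6π (z 0) (z 1) (z 2) (z 3) (z 4) (z 5))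
  rw [← hπ, map_list_prod, List.map_ofFn]
  simpa [List.ofFn_succ, mul_assoc] using hz

theorem list_prod_mem_of_ne_nil {B σ : Type*} [Monoid B] [SetLike σ B] [MulMemClass σ B] {S : σ}
    {l : List B} (hl : l ≠ []) (hS : ∀ x ∈ l, x ∈ S) : l.prod ∈ S := by
  induction l, hl using List.recOnNeNil with
  | singleton x => simpa using hS
  | cons x l _ ih =>
    obtain ⟨hx, hl⟩ := List.forall_mem_cons.1 hS
    rw [List.prod_cons]
    exact mul_mem hx (ih hl)

theorem isUnit_natCast_factorial {F : Type*} [Field F] {n : ℕ}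
    (hn : ringChar F = 0 ∨ n < ringChar F) : IsUnit (n.factorial : F) := by
  rcases hn with h0 | hlt
  · have : CharZero F := (CharP.ringChar_zero_iff_CharZero F).1 h0
    exact IsUnit.natCast_factorial_of_algebra F n
  · have : Fact (ringChar F).Prime := ⟨CharP.char_prime_of_ne_zero F (p := ringChar F) (by lia)⟩
    exact (IsUnit.natCast_factorial_iff_of_charP (ringChar F)).2 hlt

theorem stmt4_general {R X : Type*} [CommRing R] (h6 : IsUnit (6 : R))
    (I : TwoSidedIdeal (FreeAlgebra R X))
    (hI : ∀ a ∈ NonUnitalAlgebra.adjoin R (Set.range (ι R (X := X))), a ^ 3 ∈ I) :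
    (∀ y : Fin 6 → List X, (∀ i, y i ≠ []) →
      (List.ofFn fun i => ((y i).map (ι R)).prod).prod ∈ I) ∧
    (∀ l : List X, 6 ≤ l.length → (l.map (ι R)).prod ∈ I) := by
  have hsix (y : Fin 6 → List X) (hy : ∀ i, y i ≠ []) :
      (List.ofFn fun i => ((y i).map (ι R)).prod).prod ∈ I := by
    refine prod_ofFn_six_mem_of_cube_mem ?_
      (NonUnitalAlgebra.adjoin R (Set.range (ι R))).toNonUnitalSubring I hI _ fun i => ?_
    · simpa only [map_ofNat] using h6.map (algebraMap R (FreeAlgebra R X))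
    · refine list_prod_mem_of_ne_nil (by simpa using hy i) ?_
      intro x hx
      obtain ⟨v, -, rfl⟩ := List.mem_map.1 hx
      exact NonUnitalAlgebra.subset_adjoin R ⟨v, rfl⟩
  refine ⟨hsix, fun l hl => ?_⟩
  match l, hl with
  | a :: b :: c :: d :: e :: f :: t, _ =>
    simpa [List.ofFn_succ] using
      hsix ![[a], [b], [c], [d], [e], f :: t] (by intro i; fin_cases i <;> simp)

theorem adjoin_range_ι_le_MFsub {F : Type} [Field F] {d : ℕ} :
    (NonUnitalAlgebra.adjoin F (Set.range (ι F : Ltr d → FA F d))).toSubmodule ≤ MFsub F d := by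
  rw [NonUnitalAlgebra.adjoin_eq_span]
  refine Submodule.span_mono fun w hw => ?_
  induction hw using Subsemigroup.closure_induction with
  | mem _ h =>
    obtain ⟨x, rfl⟩ := h
    exact ⟨[x], by simp, by simp [wordOf]⟩
  | mul _ _ _ _ hu hv =>
    obtain ⟨k, hk, rfl⟩ := hu
    obtain ⟨l, -, rfl⟩ := hv
    exact ⟨k ++ l, by simp [hk], by simp [wordOf]⟩

/-- if `char F = 0` or `char F > 3`, then any product of six words is zero in
`A_{3,d}`; in particular every word of length at least `6` is zero in `A_{3,d}`. -/
theorem stmt4 (F : Type) [Field F] [Infinite F] (d : ℕ)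
    (hch : ringChar F = 0 ∨ 3 < ringChar F) :
    (∀ y : Fin 6 → List (Ltr d), (∀ i, y i ≠ []) →
      (List.ofFn fun i => wordOf F d (y i)).prod ∈ idealA F d) ∧
    (∀ l : List (Ltr d), 6 ≤ l.length → wordOf F d l ∈ idealA F d) :=
  stmt4_general (isUnit_natCast_factorial hch) (idealA F d) fun a ha =>
    TwoSidedIdeal.subset_span (Or.inl ⟨a, adjoin_range_ι_le_MFsub ha, rfl⟩)
end

section
/- For all words a, b ∈ M one has (ab)² = b²a² in A_{3,d}; more generally, for all words a_1, …, a_s ∈ M one has (a_1 a_2 ⋯ a_s)² = a_s² ⋯ a_2² a_1² in A_{3,d}. -/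
open FreeAlgebra MulOpposite

variable (F : Type) [Field F] (d : ℕ)

/-!
In a ring where `2` is cancellable and all cubes of a subring vanish, polarizing `x ^ 3 = 0` gives
`P(a, b) := a²b + aba + ba² = 0`. Expanding, `P(a, b) b - P(b, a²) = abab - b²a²`, so squaring
reverses products already in `N_{3,d}`.
-/

theorem map_list_prod_eq_prod_reverse_map {M N : Type*} [Monoid M] [Monoid N] {f : M → N}
    (h1 : f 1 = 1) {S : Subsemigroup M} (hf : ∀ a ∈ S, ∀ b ∈ S, f (a * b) = f b * f a)
    {L : List M} (hL : ∀ a ∈ L, a ∈ S) : f L.prod = (L.reverse.map f).prod := by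
  induction L with
  | nil => simpa using h1
  | cons a L ih =>
    obtain ⟨ha, hL⟩ := List.forall_mem_cons.mp hL
    rcases eq_or_ne L [] with rfl | hne
    · simp
    · have hprod : L.prod ∈ S :=
        L.prod_induction_nonempty (· ∈ S) (fun _ _ => mul_mem) hne hL
      simp [hf a ha _ hprod, ih hL]

section NilIndexThree

variable {R : Type*} [Ring R]

theorem sq_mul_add_mul_mul_add_mul_sq_eq_zero (h2 : IsLeftRegular (2 : R)) {a b : R}
    (hb : b ^ 3 = 0) (hadd : (b + a) ^ 3 = 0) (hsub : (b - a) ^ 3 = 0) :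
    a ^ 2 * b + a * b * a + b * a ^ 2 = 0 := by
  have polarization : 2 * (a ^ 2 * b + a * b * a + b * a ^ 2) =
      (b + a) ^ 3 + (b - a) ^ 3 - 2 * b ^ 3 := by
    noncomm_ring
  apply h2
  simp only [polarization, hb, hadd, hsub, mul_zero, add_zero, sub_zero]

theorem mul_sq_eq_sq_mul_sq_of_pow_three_eq_zero (h2 : IsLeftRegular (2 : R))
    {S : NonUnitalSubring R} (hS : ∀ x ∈ S, x ^ 3 = 0) {a b : R} (ha : a ∈ S) (hb : b ∈ S) :
    (a * b) ^ 2 = b ^ 2 * a ^ 2 := by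
  have polarized {x y : R} (hx : x ∈ S) (hy : y ∈ S) :
      x ^ 2 * y + x * y * x + y * x ^ 2 = 0 :=
    sq_mul_add_mul_mul_add_mul_sq_eq_zero h2 (hS y hy) (hS _ (add_mem hy hx))
      (hS _ (sub_mem hy hx))
  have ha2 : a ^ 2 ∈ S := sq a ▸ mul_mem ha ha
  rw [← sub_eq_zero]
  calc (a * b) ^ 2 - b ^ 2 * a ^ 2
      = (a ^ 2 * b + a * b * a + b * a ^ 2) * b
          - (b ^ 2 * a ^ 2 + b * a ^ 2 * b + a ^ 2 * b ^ 2) := by noncomm_ring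
    _ = 0 := by rw [polarized ha hb, polarized hb ha2, zero_mul, sub_zero]

theorem list_prod_sq_eq_prod_reverse_map_sq_of_pow_three_eq_zero (h2 : IsLeftRegular (2 : R))
    {S : NonUnitalSubring R} (hS : ∀ x ∈ S, x ^ 3 = 0) {L : List R} (hL : ∀ a ∈ L, a ∈ S) :
    L.prod ^ 2 = (L.reverse.map (· ^ 2)).prod :=
  map_list_prod_eq_prod_reverse_map (f := (· ^ 2)) (one_pow 2) (S := S.toSubsemigroup)
    (fun _ ha _ hb => mul_sq_eq_sq_mul_sq_of_pow_three_eq_zero h2 hS ha hb) hL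

theorem stmt5_general (h2 : IsUnit (2 : R)) (S : NonUnitalSubring R) (I : TwoSidedIdeal R)
    (hI : ∀ x ∈ S, x ^ 3 ∈ I) :
    (∀ a ∈ S, ∀ b ∈ S, (a * b) ^ 2 - b ^ 2 * a ^ 2 ∈ I) ∧
    (∀ L : List R, (∀ a ∈ L, a ∈ S) →
      L.prod ^ 2 - (L.reverse.map (· ^ 2)).prod ∈ I) := by
  let π := I.ringCon.mk'
  have mem_iff (x : R) : x ∈ I ↔ π x = 0 := by
    rw [← TwoSidedIdeal.mem_ker, TwoSidedIdeal.ker_ringCon_mk']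
  have two_regular : IsLeftRegular (2 : I.ringCon.Quotient) :=
    (map_ofNat π 2 ▸ h2.map π).isRegular.left
  have cube_eq_zero : ∀ x ∈ S.map π, x ^ 3 = 0 := by
    rintro _ ⟨x, hx, rfl⟩
    exact map_pow π x 3 ▸ (mem_iff _).mp (hI x hx)
  have map_mem {x : R} (hx : x ∈ S) : π x ∈ S.map π := ⟨x, hx, rfl⟩
  refine ⟨fun a ha b hb => ?_, fun L hL => ?_⟩ <;> rw [mem_iff, map_sub, sub_eq_zero]
  · simpa only [map_mul, map_pow] using mul_sq_eq_sq_mul_sq_of_pow_three_eq_zero two_regular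
      cube_eq_zero (map_mem ha) (map_mem hb)
  · have hπL : ∀ y ∈ L.map π, y ∈ S.map π := List.forall_mem_map.mpr fun a ha => map_mem (hL a ha)
    simpa [map_list_prod, Function.comp_def] using
      list_prod_sq_eq_prod_reverse_map_sq_of_pow_three_eq_zero two_regular cube_eq_zero hπL

end NilIndexThree

theorem isUnit_two_of_ringChar_ne_two {K A : Type*} [Field K] [Ring A] [Algebra K A]
    (h2 : ringChar K ≠ 2) : IsUnit (2 : A) :=
  map_ofNat (algebraMap K A) 2 ▸ (IsUnit.mk0 2 (Ring.two_ne_zero h2)).map (algebraMap K A)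

theorem wordOf_append (l m : List (Ltr d)) :
    wordOf F d (l ++ m) = wordOf F d l * wordOf F d m := by
  simp only [wordOf, List.map_append, List.prod_append]

theorem wordOf_mem_MFsub {l : List (Ltr d)} (hl : l ≠ []) : wordOf F d l ∈ MFsub F d :=
  Submodule.subset_span ⟨l, hl, rfl⟩

theorem MFsub_mul_le : MFsub F d * MFsub F d ≤ MFsub F d := by
  rw [MFsub, Submodule.span_mul_span]
  apply Submodule.span_mono
  rintro _ ⟨_, ⟨l, hl, rfl⟩, _, ⟨m, -, rfl⟩, rfl⟩
  exact ⟨l ++ m, List.append_ne_nil_of_left_ne_nil hl m, (wordOf_append F d l m).symm⟩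

/-- The free non-unital algebra `M_F`, bundled as a non-unital subring so that
`stmt5_general` applies to it. -/
def MFsubring : NonUnitalSubring (FA F d) :=
  { (MFsub F d).toAddSubgroup with
    mul_mem' := fun ha hb => MFsub_mul_le F d (Submodule.mul_mem_mul ha hb) }

theorem pow_three_mem_idealA {a : FA F d} (ha : a ∈ MFsub F d) : a ^ 3 ∈ idealA F d :=
  TwoSidedIdeal.subset_span (Or.inl ⟨a, ha, rfl⟩)

/-- `(ab)² = b²a²` in `A_{3,d}` for all words `a, b`; more generally
`(a₁ ⋯ a_s)² = a_s² ⋯ a₁²` in `A_{3,d}` for all words `a₁, …, a_s`. -/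
theorem stmt5 (F : Type) [Field F] [Infinite F] (h2 : ringChar F ≠ 2) (d : ℕ) :
    (∀ a b : List (Ltr d), a ≠ [] → b ≠ [] →
      (wordOf F d a * wordOf F d b) ^ 2 - wordOf F d b ^ 2 * wordOf F d a ^ 2 ∈ idealA F d) ∧
    (∀ L : List (List (Ltr d)), L ≠ [] → (∀ l ∈ L, l ≠ []) →
      (L.map (wordOf F d)).prod ^ 2 - (L.reverse.map fun l => wordOf F d l ^ 2).prod
        ∈ idealA F d) := by
  obtain ⟨pair, list⟩ := stmt5_general (isUnit_two_of_ringChar_ne_two h2) (MFsubring F d)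
    (idealA F d) fun _ => pow_three_mem_idealA F d
  refine ⟨fun a b ha hb => pair _ (wordOf_mem_MFsub F d ha) _ (wordOf_mem_MFsub F d hb),
    fun L _ hL => ?_⟩
  have hLmem : ∀ w ∈ L.map (wordOf F d), w ∈ MFsubring F d :=
    List.forall_mem_map.mpr fun l hl => wordOf_mem_MFsub F d (hL l hl)
  simpa [Function.comp_def] using list _ hLmem
end

section
/- Assume char(F) = 3 and d ≥ 2. If a ∈ M is a word with deg_{x_1}(a) = 3 and deg_{x_2}(a) = 3, then in A_{3,d} one has a = Σ_i α_i · a_i · x_1² x_2² x_1 x_2 · b_i for some α_i ∈ F and some a_i, b_i ∈ M_1. -/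
open FreeAlgebra MulOpposite

variable (F : Type) [Field F] (d : ℕ)

/-!
Write `x`, `y` for the two letters and `D_x(a) = x²ax`. It is enough to show that the word vanishes
once `x²y²xy` is divided out along with the cubes. Linearizing `x³ = 0` gives
`x²a + xax + ax² = 0`, and since `3 = 0` this holds even when `a` has a constant term. It follows
that `D_x` is a derivation and that `xaxbx = a D_x(b) - D_x(a) b`, so a word with three letters `x`
is a combination of elements `p D_x(q) r`, where `p`, `q`, `r` still contain the letters `y`.

Polarizing the Leibniz rule in `x` gives `D_x(a) [b, c] = [c, a] D_x(b)`, and together with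
`x²y²xy = 0` this yields `D_x(a) u D_y(b) = 0` and `D_y(D_x(a)) = 0`. By the Leibniz rule `q` may be
taken to be a single letter. Applying `yayby = a D_y(b) - D_y(a) b` to three letters `y` around
or inside `D_x(q)` then shows that `p D_x(q) r = 0`.
-/

/-- A left ideal `N` of a ring `R` of characteristic three such that `a ^ 3 = 0` for every
`a ∈ N` and `R` is the sum of `N` and its centre. The model is the unitization of a nil algebra of
index three over a field of characteristic three. -/
structure IsCubeNil {R : Type*} [Ring R] (N : Ideal R) : Prop where
  three_eq_zero : (3 : R) = 0
  pow_three_eq_zero : ∀ a ∈ N, a ^ 3 = 0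
  exists_central_sub_mem : ∀ r : R, ∃ z ∈ Subring.center R, r - z ∈ N

/-- The map `D_x : a ↦ x² a x`, which is a derivation of `R` when `x` lies in an ideal satisfying
`IsCubeNil`, see `IsCubeNil.nilDer_mul`. -/
def nilDer {R : Type*} [Ring R] (x a : R) : R := x ^ 2 * a * x

/-- The part of `nilDer (x + c) a` that is linear in `c`, for polarizing the Leibniz rule of
`nilDer x`. -/
def nilDerPolar {R : Type*} [Ring R] (x c a : R) : R := x ^ 2 * a * c + (x * c + c * x) * a * x

namespace IsCubeNil

variable {R : Type*} [Ring R] {N : Ideal R} {x c : R}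

theorem linearization_of_mem (h : IsCubeNil N) (hx : x ∈ N) {a : R} (ha : a ∈ N) :
    x ^ 2 * a + x * a * x + a * x ^ 2 = 0 := by
  have h_add := h.pow_three_eq_zero (x + a) (add_mem hx ha)
  have h_sub := h.pow_three_eq_zero (x - a) (sub_mem hx ha)
  have h_a := h.pow_three_eq_zero a ha
  linear_combination (norm := noncomm_ring) h_sub - h_add + 2 * h_a +
    (x ^ 2 * a + x * a * x + a * x ^ 2) * h.three_eq_zero

theorem linearization (h : IsCubeNil N) (hx : x ∈ N) (a : R) :
    x ^ 2 * a + x * a * x + a * x ^ 2 = 0 := by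
  obtain ⟨z, hz, ha⟩ := h.exists_central_sub_mem a
  have h_noncentral := h.linearization_of_mem hx ha
  have h_comm : z * x = x * z := (Subring.mem_center_iff.mp hz x).symm
  linear_combination (norm := noncomm_ring) h_noncentral + x * h_comm + h_comm * x +
    x * h_comm + x ^ 2 * z * h.three_eq_zero

theorem multilinearization (h : IsCubeNil N) (hx : x ∈ N) (hc : c ∈ N) (a : R) :
    x * c * a + c * x * a + x * a * c + c * a * x + a * x * c + a * c * x = 0 := by
  linear_combination (norm := noncomm_ring) h.linearization (add_mem hx hc) a -
    h.linearization hx a - h.linearization hc a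

theorem mul_mul_sq_eq_neg (h : IsCubeNil N) (hx : x ∈ N) (a : R) :
    x * a * x ^ 2 = -nilDer x a := by
  rw [nilDer]
  linear_combination (norm := noncomm_ring) x * h.linearization hx a - h.pow_three_eq_zero x hx * a

theorem nilDer_mul (h : IsCubeNil N) (hx : x ∈ N) (a b : R) :
    nilDer x (a * b) = nilDer x a * b + a * nilDer x b := by
  have h_anti := h.mul_mul_sq_eq_neg hx
  simp only [nilDer] at *
  linear_combination (norm := noncomm_ring) x * a * h.linearization hx b - h_anti a * b -
    h_anti (a * b) - h.linearization hx a * b * x + x ^ 2 * a * b * x * h.three_eq_zero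

theorem mul_mul_mul_mul_eq_sub (h : IsCubeNil N) (hx : x ∈ N) (a b : R) :
    x * a * x * b * x = a * nilDer x b - nilDer x a * b := by
  have h_leibniz := h.nilDer_mul hx a b
  simp only [nilDer] at *
  linear_combination (norm := noncomm_ring) h.linearization hx a * b * x - h_leibniz -
    a * x ^ 2 * b * x * h.three_eq_zero

theorem nilDerPolar_mul (h : IsCubeNil N) (hx : x ∈ N) (hc : c ∈ N) (a b : R) :
    nilDerPolar x c (a * b) = nilDerPolar x c a * b + a * nilDerPolar x c b := by
  -- `D_{x+c} - D_{x-c} = 2 (D_c + nilDerPolar x c)`, and `-2 = 1`.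
  have h_add := h.nilDer_mul (add_mem hx hc) a b
  have h_sub := h.nilDer_mul (sub_mem hx hc) a b
  have h_c := h.nilDer_mul hc a b
  simp only [nilDer, nilDerPolar] at *
  linear_combination (norm := noncomm_ring) h_sub - h_add + 2 * h_c +
    (x ^ 2 * (a * b) * c + (x * c + c * x) * (a * b) * x -
      (x ^ 2 * a * c + (x * c + c * x) * a * x) * b -
      a * (x ^ 2 * b * c + (x * c + c * x) * b * x)) * h.three_eq_zero

theorem nilDerPolar_eq_lie (h : IsCubeNil N) (hx : x ∈ N) (c a : R) :
    nilDerPolar x c a = x ^ 2 * ⁅a, c⁆ + c * ⁅a, x ^ 2⁆ := by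
  simp only [nilDerPolar, Ring.lie_def]
  linear_combination (norm := noncomm_ring) c * h.linearization hx a +
    h.linearization hx (c * a) - c * a * x ^ 2 * h.three_eq_zero

theorem lie_sq_mul_lie (h : IsCubeNil N) (hx : x ∈ N) (hc : c ∈ N) (a b : R) :
    ⁅x ^ 2, a⁆ * ⁅b, c⁆ = ⁅c, a⁆ * ⁅x ^ 2, b⁆ := by
  have h_leibniz := h.nilDerPolar_mul hx hc a b
  simp only [h.nilDerPolar_eq_lie hx c] at h_leibniz
  simp only [Ring.lie_def] at h_leibniz ⊢
  linear_combination (norm := noncomm_ring) h_leibniz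

theorem nilDer_mul_lie (h : IsCubeNil N) (hx : x ∈ N) (hc : c ∈ N) (a b : R) :
    nilDer x a * ⁅b, c⁆ = ⁅c, a⁆ * nilDer x b := by
  have h_lie (u : R) : x * ⁅x ^ 2, u⁆ = nilDer x u := by
    rw [Ring.lie_def]
    linear_combination (norm := noncomm_ring) h.pow_three_eq_zero x hx * u -
      h.mul_mul_sq_eq_neg hx u
  have h_mul_lie (u : R) : x * u * ⁅x ^ 2, b⁆ = u * nilDer x b := by
    rw [Ring.lie_def]
    linear_combination (norm := noncomm_ring) h.mul_mul_sq_eq_neg hx u * b -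
      h.mul_mul_sq_eq_neg hx (u * b) + h.nilDer_mul hx u b
  rw [← h_lie a, mul_assoc, h.lie_sq_mul_lie hx hc, ← mul_assoc, h_mul_lie]

end IsCubeNil

/-- Two elements `x`, `y` of an ideal `N` satisfying `IsCubeNil` for which `x²y²xy = 0`. This is
what remains of the letters `x₁`, `x₂` after dividing out the word `x₁²x₂²x₁x₂`. -/
structure IsCubeNilPair {R : Type*} [Ring R] (N : Ideal R) (x y : R) : Prop
    extends IsCubeNil N where
  mem_left : x ∈ N
  mem_right : y ∈ N
  sq_mul_nilDer_eq_zero : x ^ 2 * nilDer y x = 0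

namespace IsCubeNilPair

variable {R : Type*} [Ring R] {N : Ideal R} {x y : R}

theorem swap (h : IsCubeNilPair N x y) : IsCubeNilPair N y x where
  toIsCubeNil := h.toIsCubeNil
  mem_left := h.mem_right
  mem_right := h.mem_left
  sq_mul_nilDer_eq_zero := by
    have h_leibniz := h.nilDer_mul h.mem_left (y ^ 2) y
    have hxy := h.sq_mul_nilDer_eq_zero
    simp only [nilDer] at *
    linear_combination (norm := noncomm_ring) -hxy - h_leibniz +
      x ^ 2 * h.pow_three_eq_zero y h.mem_right * x

theorem sq_mul_nilDer_left_mul_eq_zero (h : IsCubeNilPair N x y) (b : R) :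
    x ^ 2 * nilDer y (x * b) = 0 := by
  linear_combination (norm := noncomm_ring) x ^ 2 * h.nilDer_mul h.mem_right x b +
    h.sq_mul_nilDer_eq_zero * b + h.pow_three_eq_zero x h.mem_left * nilDer y b

theorem nilDer_mul_sq_mul_eq_zero (h : IsCubeNilPair N x y) (a : R) :
    nilDer y (a * x ^ 2) * x = 0 := by
  have h_leibniz := h.nilDer_mul h.mem_right a (x ^ 2)
  have hyx := h.swap.sq_mul_nilDer_eq_zero
  simp only [nilDer] at *
  linear_combination (norm := noncomm_ring) h_leibniz * x +
    y ^ 2 * a * y * h.pow_three_eq_zero x h.mem_left + a * hyx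

theorem nilDer_mul_mul_sq_eq_zero (h : IsCubeNilPair N x y) (a : R) :
    nilDer x y * a * y ^ 2 = 0 := by
  rw [nilDer]
  linear_combination (norm := noncomm_ring) x ^ 2 * h.mul_mul_sq_eq_neg h.mem_right (x * a) -
    h.sq_mul_nilDer_left_mul_eq_zero a

theorem sq_mul_mul_nilDer_eq_zero (h : IsCubeNilPair N x y) (a : R) :
    y ^ 2 * a * nilDer x y = 0 := by
  have h_leibniz := h.nilDer_mul h.mem_right a x
  have h_anti := h.mul_mul_sq_eq_neg h.mem_left y
  have h_zero := h.swap.nilDer_mul_mul_sq_eq_zero 1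
  simp only [nilDer] at *
  linear_combination (norm := noncomm_ring) y ^ 2 * a * h_anti - h_leibniz * x ^ 2 -
    a * h_zero - y ^ 2 * a * y * h.pow_three_eq_zero x h.mem_left

theorem nilDer_sq_mul_mul_eq_zero (h : IsCubeNilPair N x y) (a : R) :
    nilDer x (y ^ 2) * a * y = 0 := by
  have h_left : nilDer x y * y * a * y = 0 := by
    linear_combination (norm := noncomm_ring) nilDer x y * h.linearization h.mem_right a -
      h.nilDer_mul_mul_sq_eq_zero 1 * a - h.nilDer_mul_mul_sq_eq_zero a
  have h_right : y * nilDer x y * a * y = 0 := by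
    linear_combination (norm := noncomm_ring) h.linearization h.mem_right (nilDer x y * a) -
      h.swap.sq_mul_nilDer_eq_zero * a - h.nilDer_mul_mul_sq_eq_zero a
  rw [sq y, h.nilDer_mul h.mem_left, add_mul, add_mul, h_left, h_right, add_zero]

theorem mul_mul_nilDer_sq_eq_zero (h : IsCubeNilPair N x y) (a : R) :
    y * a * nilDer x (y ^ 2) = 0 := by
  have h_left : y * a * nilDer x y * y = 0 := by
    linear_combination (norm := noncomm_ring) h.linearization h.mem_right (a * nilDer x y) -
      h.sq_mul_mul_nilDer_eq_zero a - a * h.nilDer_mul_mul_sq_eq_zero 1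
  have h_right : y * a * y * nilDer x y = 0 := by
    linear_combination (norm := noncomm_ring) h.linearization h.mem_right a * nilDer x y -
      h.sq_mul_mul_nilDer_eq_zero a - a * h.swap.sq_mul_nilDer_eq_zero
  rw [sq y, h.nilDer_mul h.mem_left, mul_add, ← mul_assoc, ← mul_assoc, h_left, h_right, add_zero]

theorem nilDer_mul_nilDer_eq_zero (h : IsCubeNilPair N x y) (a b : R) :
    nilDer x a * nilDer y b = 0 := by
  have h_lie : ⁅y ^ 2, b * y⁆ = nilDer y b := by
    rw [Ring.lie_def, nilDer]
    linear_combination (norm := noncomm_ring) -b * h.pow_three_eq_zero y h.mem_right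
  rw [← h_lie, h.nilDer_mul_lie h.mem_left (N.mul_mem_left b h.mem_right), Ring.lie_def]
  linear_combination (norm := noncomm_ring) b * h.mul_mul_nilDer_sq_eq_zero a -
    a * b * h.mul_mul_nilDer_sq_eq_zero 1

theorem nilDer_mul_mul_nilDer_eq_zero (h : IsCubeNilPair N x y) (a u b : R) :
    nilDer x a * u * nilDer y b = 0 := by
  linear_combination (norm := noncomm_ring) h.nilDer_mul_nilDer_eq_zero a (u * b) -
    h.nilDer_mul_nilDer_eq_zero a u * b - nilDer x a * h.nilDer_mul h.mem_right u b

theorem nilDer_nilDer_eq_zero (h : IsCubeNilPair N x y) (a : R) : nilDer y (nilDer x a) = 0 := by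
  have h_multilinear := h.multilinearization (N.mul_mem_left x h.mem_left)
    (N.mul_mem_left y h.mem_right) (a * x)
  have h_leibniz := h.nilDer_mul h.mem_left (y ^ 2) a
  have h_anti := h.mul_mul_sq_eq_neg h.mem_left (y ^ 2)
  have h_zero := h.nilDer_sq_mul_mul_eq_zero a
  have hxy := h.sq_mul_nilDer_eq_zero
  have hx := h.pow_three_eq_zero x h.mem_left
  have hy := h.pow_three_eq_zero y h.mem_right
  simp only [nilDer] at *
  linear_combination (norm := noncomm_ring) y ^ 2 * (x ^ 2 * a * x) * y * h.three_eq_zero -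
    h_multilinear * y + x ^ 2 * a * x * hy + y ^ 2 * a * hx * y + a * hx * y ^ 2 * y +
    h_leibniz * y + h_zero + a * h_anti * y - a * hxy

theorem nilDer_mul_nilDer_mul_eq_zero (h : IsCubeNilPair N x y) (u a v : R) :
    nilDer y (u * nilDer x a * v) = 0 := by
  rw [h.nilDer_mul h.mem_right, h.nilDer_mul h.mem_right, h.nilDer_nilDer_eq_zero, mul_assoc u,
    h.nilDer_mul_nilDer_eq_zero, h.swap.nilDer_mul_nilDer_eq_zero]
  simp only [mul_zero, zero_mul, add_zero]

theorem nilDer_mul_triple_eq_zero (h : IsCubeNilPair N x y) (a u b c : R) :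
    nilDer x a * u * (y * b * y * c * y) = 0 := by
  rw [h.mul_mul_mul_mul_eq_sub h.mem_right]
  linear_combination (norm := noncomm_ring) h.nilDer_mul_mul_nilDer_eq_zero a (u * b) c -
    h.nilDer_mul_mul_nilDer_eq_zero a u b * c

theorem triple_mul_nilDer_eq_zero (h : IsCubeNilPair N x y) (b c u a : R) :
    y * b * y * c * y * u * nilDer x a = 0 := by
  rw [h.mul_mul_mul_mul_eq_sub h.mem_right]
  linear_combination (norm := noncomm_ring) b * h.swap.nilDer_mul_mul_nilDer_eq_zero c u a -
    h.swap.nilDer_mul_mul_nilDer_eq_zero b (c * u) a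

theorem triple_nilDer_left_eq_zero (h : IsCubeNilPair N x y) (u a v c : R) :
    y * (u * nilDer x a * v) * y * c * y = 0 := by
  rw [h.mul_mul_mul_mul_eq_sub h.mem_right]
  linear_combination (norm := noncomm_ring) u * h.nilDer_mul_mul_nilDer_eq_zero a v c -
    h.nilDer_mul_nilDer_mul_eq_zero u a v * c

theorem triple_nilDer_right_eq_zero (h : IsCubeNilPair N x y) (b u a v : R) :
    y * b * y * (u * nilDer x a * v) * y = 0 := by
  rw [h.mul_mul_mul_mul_eq_sub h.mem_right]
  linear_combination (norm := noncomm_ring) b * h.nilDer_mul_nilDer_mul_eq_zero u a v -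
    h.swap.nilDer_mul_mul_nilDer_eq_zero b u a * v

theorem nilDer_self_mul_pair_eq_zero (h : IsCubeNilPair N x y) (b c : R) :
    nilDer x y * b * y * c * y = 0 := by
  have h_triple := h.mul_mul_mul_mul_eq_sub h.mem_right (x * b) c
  rw [nilDer]
  linear_combination (norm := noncomm_ring) x ^ 2 * h_triple -
    h.sq_mul_nilDer_left_mul_eq_zero b * c + h.pow_three_eq_zero x h.mem_left * b * nilDer y c

theorem mul_nilDer_self_mul_eq_zero (h : IsCubeNilPair N x y) (b c : R) :
    y * b * nilDer x y * c * y = 0 := by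
  have h_triple := h.mul_mul_mul_mul_eq_sub h.mem_right (b * x ^ 2) (x * c)
  change y * b * (x ^ 2 * y * x) * c * y = 0
  linear_combination (norm := noncomm_ring) h_triple +
    b * h.sq_mul_nilDer_left_mul_eq_zero c - h.nilDer_mul_sq_mul_eq_zero b * c

theorem pair_mul_nilDer_self_eq_zero (h : IsCubeNilPair N x y) (b c : R) :
    y * b * y * c * nilDer x y = 0 := by
  have h_triple := h.mul_mul_mul_mul_eq_sub h.mem_right b (c * x ^ 2)
  change y * b * y * c * (x ^ 2 * y * x) = 0
  linear_combination (norm := noncomm_ring) h_triple * x + b * h.nilDer_mul_sq_mul_eq_zero c -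
    nilDer y b * c * h.pow_three_eq_zero x h.mem_left

end IsCubeNilPair

section Words

variable {α : Type*} [BEq α] [LawfulBEq α]

theorem exists_eq_append_cons_of_lt_count {a : α} {n : ℕ} {l : List α} (hl : n < l.count a) :
    ∃ p q : List α, l = p ++ a :: q ∧ n ≤ q.count a := by
  obtain ⟨p, q, rfl, hp⟩ := List.eq_append_cons_of_mem (List.count_pos_iff.mp (pos_of_gt hl))
  refine ⟨p, q, rfl, ?_⟩
  simpa only [List.count_append, List.count_eq_zero_of_not_mem hp, List.count_cons_self, zero_add,
    Nat.lt_succ_iff] using hl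

theorem exists_eq_append_of_two_le_count {a : α} {l : List α} (hl : 2 ≤ l.count a) :
    ∃ p q r : List α, l = p ++ a :: (q ++ a :: r) := by
  obtain ⟨p, l', rfl, hl'⟩ := exists_eq_append_cons_of_lt_count hl
  obtain ⟨q, r, rfl, -⟩ := exists_eq_append_cons_of_lt_count hl'
  exact ⟨p, q, r, rfl⟩

theorem exists_eq_append_of_three_le_count {a : α} {l : List α} (hl : 3 ≤ l.count a) :
    ∃ p q r s : List α, l = p ++ a :: (q ++ a :: (r ++ a :: s)) := by
  obtain ⟨p, l', rfl, hl'⟩ := exists_eq_append_cons_of_lt_count hl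
  obtain ⟨q, r, s, rfl⟩ := exists_eq_append_of_two_le_count hl'
  exact ⟨p, q, r, s, rfl⟩

namespace IsCubeNilPair

variable {R : Type*} [Ring R] {N : Ideal R} {x : R} {f : α → R} {X Y : α}

theorem prod_mul_nilDer_self_mul_prod_eq_zero (h : IsCubeNilPair N x (f Y)) {p r : List α}
    (hY : 2 ≤ p.count Y + r.count Y) :
    (p.map f).prod * nilDer x (f Y) * (r.map f).prod = 0 := by
  obtain hp | ⟨hp, hr⟩ | hr : 2 ≤ p.count Y ∨ (0 < p.count Y ∧ 0 < r.count Y) ∨ 2 ≤ r.count Y := by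
    omega
  · obtain ⟨s, b, c, rfl⟩ := exists_eq_append_of_two_le_count hp
    have h_zero := h.pair_mul_nilDer_self_eq_zero (b.map f).prod (c.map f).prod
    simp only [List.map_append, List.map_cons, List.prod_append, List.prod_cons]
    linear_combination (norm := noncomm_ring) (s.map f).prod * h_zero * (r.map f).prod
  · obtain ⟨s, b, rfl, -⟩ := exists_eq_append_cons_of_lt_count hp
    obtain ⟨c, t, rfl, -⟩ := exists_eq_append_cons_of_lt_count hr
    have h_zero := h.mul_nilDer_self_mul_eq_zero (b.map f).prod (c.map f).prod
    simp only [List.map_append, List.map_cons, List.prod_append, List.prod_cons]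
    linear_combination (norm := noncomm_ring) (s.map f).prod * h_zero * (t.map f).prod
  · obtain ⟨b, c, t, rfl⟩ := exists_eq_append_of_two_le_count hr
    have h_zero := h.nilDer_self_mul_pair_eq_zero (b.map f).prod (c.map f).prod
    simp only [List.map_append, List.map_cons, List.prod_append, List.prod_cons]
    linear_combination (norm := noncomm_ring) (p.map f).prod * h_zero * (t.map f).prod

theorem prod_mul_nilDer_mul_prod_eq_zero (h : IsCubeNilPair N x (f Y)) (a : R) {p r : List α}
    (hY : 3 ≤ p.count Y + r.count Y) :
    (p.map f).prod * nilDer x a * (r.map f).prod = 0 := by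
  obtain hp | ⟨hp, hr⟩ | ⟨hp, hr⟩ | hr : 3 ≤ p.count Y ∨ (2 ≤ p.count Y ∧ 0 < r.count Y) ∨
      (0 < p.count Y ∧ 2 ≤ r.count Y) ∨ 3 ≤ r.count Y := by
    omega
  · obtain ⟨s, b, c, u, rfl⟩ := exists_eq_append_of_three_le_count hp
    have h_zero := h.triple_mul_nilDer_eq_zero (b.map f).prod (c.map f).prod (u.map f).prod a
    simp only [List.map_append, List.map_cons, List.prod_append, List.prod_cons]
    linear_combination (norm := noncomm_ring) (s.map f).prod * h_zero * (r.map f).prod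
  · obtain ⟨s, b, u, rfl⟩ := exists_eq_append_of_two_le_count hp
    obtain ⟨v, t, rfl, -⟩ := exists_eq_append_cons_of_lt_count hr
    have h_zero := h.triple_nilDer_right_eq_zero (b.map f).prod (u.map f).prod a (v.map f).prod
    simp only [List.map_append, List.map_cons, List.prod_append, List.prod_cons]
    linear_combination (norm := noncomm_ring) (s.map f).prod * h_zero * (t.map f).prod
  · obtain ⟨s, u, rfl, -⟩ := exists_eq_append_cons_of_lt_count hp
    obtain ⟨v, c, t, rfl⟩ := exists_eq_append_of_two_le_count hr
    have h_zero := h.triple_nilDer_left_eq_zero (u.map f).prod a (v.map f).prod (c.map f).prod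
    simp only [List.map_append, List.map_cons, List.prod_append, List.prod_cons]
    linear_combination (norm := noncomm_ring) (s.map f).prod * h_zero * (t.map f).prod
  · obtain ⟨u, b, c, t, rfl⟩ := exists_eq_append_of_three_le_count hr
    have h_zero := h.nilDer_mul_triple_eq_zero a (u.map f).prod (b.map f).prod (c.map f).prod
    simp only [List.map_append, List.map_cons, List.prod_append, List.prod_cons]
    linear_combination (norm := noncomm_ring) (p.map f).prod * h_zero * (t.map f).prod

theorem prod_mul_nilDer_prod_mul_prod_eq_zero (h : IsCubeNilPair N x (f Y)) {p q r : List α}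
    (hY : 3 ≤ p.count Y + q.count Y + r.count Y) :
    (p.map f).prod * nilDer x (q.map f).prod * (r.map f).prod = 0 := by
  induction q generalizing p with
  | nil =>
    have h_cube := h.pow_three_eq_zero x h.mem_left
    simp only [List.map_nil, List.prod_nil, nilDer]
    linear_combination (norm := noncomm_ring) (p.map f).prod * h_cube * (r.map f).prod
  | cons z q ih =>
    have h_head : (p.map f).prod * nilDer x (f z) * ((q ++ r).map f).prod = 0 := by
      by_cases hz : z = Y
      · subst hz
        rw [List.count_cons_self] at hY
        exact h.prod_mul_nilDer_self_mul_prod_eq_zero (by rw [List.count_append]; omega)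
      · rw [List.count_cons_of_ne hz] at hY
        exact h.prod_mul_nilDer_mul_prod_eq_zero _ (by rw [List.count_append]; omega)
    have h_tail : ((p ++ [z]).map f).prod * nilDer x (q.map f).prod * (r.map f).prod = 0 :=
      ih (by simp only [List.count_append, List.count_cons, List.count_nil] at hY ⊢; omega)
    simp only [List.map_append, List.map_cons, List.map_nil, List.prod_append, List.prod_cons,
      List.prod_nil, h.nilDer_mul h.mem_left] at h_head h_tail ⊢
    linear_combination (norm := noncomm_ring) h_head + h_tail

theorem prod_map_eq_zero (h : IsCubeNilPair N (f X) (f Y)) (hXY : X ≠ Y) {l : List α}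
    (hX : 3 ≤ l.count X) (hY : 3 ≤ l.count Y) : (l.map f).prod = 0 := by
  obtain ⟨p, q, r, s, rfl⟩ := exists_eq_append_of_three_le_count hX
  simp only [List.count_append, List.count_cons_of_ne hXY] at hY
  have h_right : ((p ++ q).map f).prod * nilDer (f X) (r.map f).prod * (s.map f).prod = 0 :=
    h.prod_mul_nilDer_prod_mul_prod_eq_zero (by rw [List.count_append]; omega)
  have h_left : (p.map f).prod * nilDer (f X) (q.map f).prod * ((r ++ s).map f).prod = 0 :=
    h.prod_mul_nilDer_prod_mul_prod_eq_zero (by rw [List.count_append]; omega)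
  have h_triple := h.mul_mul_mul_mul_eq_sub h.mem_left (q.map f).prod (r.map f).prod
  simp only [List.map_append, List.map_cons, List.prod_append, List.prod_cons] at *
  linear_combination (norm := noncomm_ring) (p.map f).prod * h_triple * (s.map f).prod +
    h_right - h_left

end IsCubeNilPair

end Words

section Augmentation

variable (K α : Type*) [CommRing K]

/-- The elements of a free algebra without constant term, i.e. the copy of the free non-unital
algebra inside the unital one. -/
def augmentationIdeal : Ideal (FreeAlgebra K α) :=
  RingHom.ker (algebraMapInv : FreeAlgebra K α →ₐ[K] K)

/-- The two-sided ideal generated by the cubes of the free non-unital algebra; the quotient by it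
is the unitization of the free nil algebra of index three. -/
def cubeIdeal : TwoSidedIdeal (FreeAlgebra K α) :=
  TwoSidedIdeal.span {u | ∃ a ∈ augmentationIdeal K α, u = a ^ 3}

variable {K α}

theorem ι_mem_augmentationIdeal (a : α) : ι K a ∈ augmentationIdeal K α := by
  simp only [augmentationIdeal, RingHom.mem_ker, algebraMapInv, lift_ι_apply, Pi.zero_apply]

theorem isCubeNil_map_of_surjective [CharP K 3] {R : Type*} [Ring R] {π : FreeAlgebra K α →+* R}
    (hπ : Function.Surjective π) (h_cube : ∀ a ∈ augmentationIdeal K α, π (a ^ 3) = 0) :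
    IsCubeNil ((augmentationIdeal K α).map π) where
  three_eq_zero := by
    have h_three : (3 : K) = 0 := mod_cast CharP.cast_eq_zero K 3
    rw [← map_ofNat (π.comp (algebraMap K (FreeAlgebra K α))) 3, h_three, map_zero]
  pow_three_eq_zero a ha := by
    obtain ⟨b, hb, rfl⟩ := (Ideal.mem_map_iff_of_surjective π hπ).mp ha
    rw [← map_pow, h_cube b hb]
  exists_central_sub_mem r := by
    obtain ⟨r, rfl⟩ := hπ r
    have h_aug : r - algebraMap K _ (algebraMapInv r) ∈ augmentationIdeal K α := by
      rw [augmentationIdeal, RingHom.mem_ker, map_sub, algebraMap_leftInverse, sub_self]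
    refine ⟨π (algebraMap K _ (algebraMapInv r)), Subring.mem_center_iff.mpr fun s => ?_, ?_⟩
    · obtain ⟨s, rfl⟩ := hπ s
      rw [← map_mul, ← map_mul, Algebra.commutes]
    · rw [← map_sub]
      exact Ideal.mem_map_of_mem π h_aug

theorem span_range_prod_map_ι :
    Submodule.span K (Set.range fun l : List α => (l.map (ι K)).prod) = ⊤ := by
  have h_closure : (Submonoid.closure (Set.range (ι K : α → FreeAlgebra K α)) : Set _) =
      Set.range fun l : List α => (l.map (ι K)).prod := by
    rw [← FreeMonoid.mrange_lift, MonoidHom.coe_mrange]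
    exact congrArg Set.range (funext (FreeMonoid.lift_apply _))
  rw [← h_closure, ← Algebra.adjoin_eq_span, FreeAlgebra.adjoin_range_ι, Algebra.top_toSubmodule]

open scoped Pointwise in
theorem mem_span_prod_mul_mul_prod_of_mem_span_singleton {g u : FreeAlgebra K α}
    (hu : u ∈ TwoSidedIdeal.span {g}) :
    u ∈ Submodule.span K {v | ∃ a b : List α,
      v = (a.map (ι K)).prod * g * (b.map (ι K)).prod} := by
  have h_subset : (Set.range fun a : List α => (a.map (ι K)).prod) * {g} *
      Set.range (fun b : List α => (b.map (ι K)).prod) ⊆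
        {v | ∃ a b : List α, v = (a.map (ι K)).prod * g * (b.map (ι K)).prod} := by
    rintro _ ⟨_, ⟨_, ⟨a, rfl⟩, _, rfl, rfl⟩, _, ⟨b, rfl⟩, rfl⟩
    exact ⟨a, b, rfl⟩
  apply Submodule.span_mono h_subset
  rw [← Submodule.span_mul_span, ← Submodule.span_mul_span, span_range_prod_map_ι,
    ← Submodule.mem_toAddSubgroup]
  rw [TwoSidedIdeal.mem_span_iff_mem_addSubgroup_closure] at hu
  refine (AddSubgroup.closure_le _).mpr ?_ hu
  rintro _ ⟨_, ⟨a, -, _, rfl, rfl⟩, b, -, rfl⟩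
  exact Submodule.mul_mem_mul (Submodule.mul_mem_mul trivial (Submodule.mem_span_singleton_self _))
    trivial

theorem mem_span_prod_map_ι_of_mem_augmentationIdeal {u : FreeAlgebra K α}
    (hu : u ∈ augmentationIdeal K α) :
    u ∈ Submodule.span K {w | ∃ l : List α, l ≠ [] ∧ w = (l.map (ι K)).prod} := by
  let S := Submodule.span K {w : FreeAlgebra K α | ∃ l : List α, l ≠ [] ∧ w = (l.map (ι K)).prod}
  let dropConst : FreeAlgebra K α →ₗ[K] FreeAlgebra K α :=
    LinearMap.id - Algebra.linearMap K _ ∘ₗ (algebraMapInv : FreeAlgebra K α →ₐ[K] K).toLinearMap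
  have h_top : ⊤ ≤ S.comap dropConst := by
    rw [← span_range_prod_map_ι, Submodule.span_le]
    rintro _ ⟨_ | ⟨a, l⟩, rfl⟩
    · simp [dropConst]
    · have h_const : algebraMapInv (ι K a) = 0 := ι_mem_augmentationIdeal a
      have h_mem : ((a :: l).map (ι K)).prod ∈ S :=
        Submodule.subset_span ⟨a :: l, List.cons_ne_nil a l, rfl⟩
      simpa [dropConst, h_const] using h_mem
  have h_zero : algebraMapInv u = 0 := hu
  simpa [dropConst, h_zero] using h_top (Submodule.mem_top : u ∈ ⊤)

theorem isCubeNilPair_of_cubeIdeal_le [CharP K 3] {X Y : α} {J : TwoSidedIdeal (FreeAlgebra K α)}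
    (h_cube : cubeIdeal K α ≤ J) (h_word : ι K X ^ 2 * ι K Y ^ 2 * ι K X * ι K Y ∈ J) :
    IsCubeNilPair ((augmentationIdeal K α).map J.ringCon.mk')
      (J.ringCon.mk' (ι K X)) (J.ringCon.mk' (ι K Y)) where
  toIsCubeNil := isCubeNil_map_of_surjective (RingCon.mk'_surjective _) fun a ha => by
    rw [← TwoSidedIdeal.mem_ker, TwoSidedIdeal.ker_ringCon_mk']
    exact h_cube (TwoSidedIdeal.subset_span ⟨a, ha, rfl⟩)
  mem_left := Ideal.mem_map_of_mem _ (ι_mem_augmentationIdeal X)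
  mem_right := Ideal.mem_map_of_mem _ (ι_mem_augmentationIdeal Y)
  sq_mul_nilDer_eq_zero := by
    simp only [nilDer, ← map_pow, ← map_mul, ← mul_assoc]
    rwa [← TwoSidedIdeal.mem_ker, TwoSidedIdeal.ker_ringCon_mk']

theorem prod_map_ι_mem_cubeIdeal_sup_span [CharP K 3] [BEq α] [LawfulBEq α] {X Y : α}
    (hXY : X ≠ Y) {l : List α} (hX : 3 ≤ l.count X) (hY : 3 ≤ l.count Y) :
    (l.map (ι K)).prod ∈
      cubeIdeal K α ⊔ TwoSidedIdeal.span {ι K X ^ 2 * ι K Y ^ 2 * ι K X * ι K Y} := by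
  set J := cubeIdeal K α ⊔ TwoSidedIdeal.span {ι K X ^ 2 * ι K Y ^ 2 * ι K X * ι K Y}
  have h_pair : IsCubeNilPair ((augmentationIdeal K α).map J.ringCon.mk')
      (J.ringCon.mk' (ι K X)) (J.ringCon.mk' (ι K Y)) :=
    isCubeNilPair_of_cubeIdeal_le le_sup_left
      (TwoSidedIdeal.mem_sup_right (TwoSidedIdeal.subset_span rfl))
  have h_zero := h_pair.prod_map_eq_zero (f := J.ringCon.mk' ∘ ι K) hXY hX hY
  rwa [← TwoSidedIdeal.ker_ringCon_mk' J, TwoSidedIdeal.mem_ker, map_list_prod, List.map_map]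

end Augmentation

theorem stmt7_general {K α : Type*} [CommRing K] [CharP K 3] [BEq α] [LawfulBEq α] {X Y : α}
    (hXY : X ≠ Y) {l : List α} (hX : 3 ≤ l.count X) (hY : 3 ≤ l.count Y) :
    ∃ s ∈ Submodule.span K {v : FreeAlgebra K α | ∃ a b : List α,
        v = (a.map (ι K)).prod * (ι K X ^ 2 * ι K Y ^ 2 * ι K X * ι K Y) * (b.map (ι K)).prod},
      (l.map (ι K)).prod - s ∈ cubeIdeal K α := by
  obtain ⟨c, hc, s, hs, h_add⟩ := TwoSidedIdeal.mem_sup.mp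
    (prod_map_ι_mem_cubeIdeal_sup_span (K := K) hXY hX hY)
  exact ⟨s, mem_span_prod_mul_mul_prod_of_mem_span_singleton hs,
    by rwa [← h_add, add_sub_cancel_right]⟩

/-- if `char F = 3` and `a` is a word with `deg_{x₁}(a) = deg_{x₂}(a) = 3`, then in
`A_{3,d}` one has `a = Σ αᵢ aᵢ x₁² x₂² x₁ x₂ bᵢ` with `αᵢ ∈ F`, `aᵢ, bᵢ ∈ M₁`. -/
theorem stmt7 (F : Type) [Field F] [Infinite F] [CharP F 3] (d : ℕ) (hd : 2 ≤ d)
    (l : List (Ltr d)) (hl : l ≠ [])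
    (hdeg1 : l.count (((⟨0, by omega⟩ : Fin d), false) : Ltr d) = 3)
    (hdeg2 : l.count (((⟨1, hd⟩ : Fin d), false) : Ltr d) = 3) :
    ∃ s ∈ Submodule.span F {y : FA F d | ∃ a b : List (Ltr d),
        y = wordOf F d a *
            (FreeAlgebra.ι F (((⟨0, by omega⟩ : Fin d), false) : Ltr d) ^ 2 *
             FreeAlgebra.ι F (((⟨1, hd⟩ : Fin d), false) : Ltr d) ^ 2 *
             FreeAlgebra.ι F (((⟨0, by omega⟩ : Fin d), false) : Ltr d) *
             FreeAlgebra.ι F (((⟨1, hd⟩ : Fin d), false) : Ltr d)) * wordOf F d b},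
      wordOf F d l - s ∈ idealA F d := by
  obtain ⟨s, hs, h_sub⟩ := stmt7_general (K := F) (by simp) hdeg1.ge hdeg2.ge
  refine ⟨s, hs, TwoSidedIdeal.span_mono ?_ h_sub⟩
  exact fun _ ⟨a, ha, hu⟩ => Or.inl ⟨a, mem_span_prod_map_ι_of_mem_augmentationIdeal ha, hu⟩
end

section
/- For all words a, b, c, e ∈ M and all u, v, w ∈ M_1, the equality ā u b̄ v c̄ w ē = 0 holds in A_{3,d}, where x̄ = x − x^T. -/
open FreeAlgebra MulOpposite

variable (F : Type) [Field F] (d : ℕ)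

/-!
The relation `T(x, s, t) = 0` lets `x` be pulled out of a sandwich `s x t`. For `x` skew it gives
`r s t = -t s r`, and then `T(c e, a, b) = 0` gives `a b c e = 0` for skew `a, b, c, e`. Combining
`T(xᵀ, b, c) = 0` and `T(x, a, b) = 0` gives the twisted commutation `x a b c = a b c xᵀ`, which
together with `a b c e = 0` kills `a b x c e`. The two outer sandwiches `a u b` and `c w e` reduce
to this case, with another element in the middle.
-/

/-- The relations of `A_{3,d}` for any ring with involution: modulo `I`, the relation
`T(x, s, t) = 0` holds for `x` in a star-stable ideal `N` (the analogue of `M_F`) and `s, t` in a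
set `S` of skew elements of `N`. Central elements complementing `N` replace the scalars. -/
structure SkewTripleIdentity {R : Type*} [Ring R] [StarRing R] (N I : TwoSidedIdeal R)
    (S : Set R) : Prop where
  exists_center_sub_mem (x : R) : ∃ z ∈ Subring.center R, x - z ∈ N
  star_mem {x : R} (hx : x ∈ N) : star x ∈ N
  mem_of_mem {s : R} (hs : s ∈ S) : s ∈ N
  star_eq_neg {s : R} (hs : s ∈ S) : star s = -s
  triple_mem {x s t : R} (hx : x ∈ N) (hs : s ∈ S) (ht : t ∈ S) :
    x * s * t + s * star x * t + s * t * x ∈ I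

namespace SkewTripleIdentity

variable {R : Type*} [Ring R] [StarRing R] {N I : TwoSidedIdeal R} {S : Set R}
  {a b c e r s t x : R}

theorem triple_star_mem (h : SkewTripleIdentity N I S) (hx : x ∈ N) (hs : s ∈ S) (ht : t ∈ S) :
    star x * s * t + s * x * t + s * t * star x ∈ I := by
  simpa only [star_star] using h.triple_mem (h.star_mem hx) hs ht

theorem mul_mul_add_reverse_mem (h : SkewTripleIdentity N I S)
    (hr : r ∈ S) (hs : s ∈ S) (ht : t ∈ S) : r * s * t + t * s * r ∈ I := by
  have hrts := h.triple_mem (h.mem_of_mem hr) ht hs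
  have htrs := h.triple_mem (h.mem_of_mem ht) hr hs
  rw [h.star_eq_neg hr] at hrts
  rw [h.star_eq_neg ht] at htrs
  have sum_eq : r * s * t + t * s * r =
      (r * t * s + t * -r * s + t * s * r) + (t * r * s + r * -t * s + r * s * t) := by
    noncomm_ring
  exact sum_eq ▸ I.add_mem hrts htrs

theorem mul_mul_mul_mem (h : SkewTripleIdentity N I S)
    (ha : a ∈ S) (hb : b ∈ S) (hc : c ∈ S) (he : e ∈ S) : a * b * c * e ∈ I := by
  have triple := h.triple_mem (N.mul_mem_right c e (h.mem_of_mem hc)) ha hb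
  rw [star_mul, h.star_eq_neg hc, h.star_eq_neg he] at triple
  have reverse := h.mul_mul_add_reverse_mem hc he ha
  have expand : a * b * c * e =
      (c * e * a * b + a * (-e * -c) * b + a * b * (c * e)) - (c * e * a + a * e * c) * b := by
    noncomm_ring
  exact expand ▸ I.sub_mem triple (I.mul_mem_right _ _ reverse)

theorem mul_triple_sub_triple_mul_star_mem (h : SkewTripleIdentity N I S)
    (hx : x ∈ N) (ha : a ∈ S) (hb : b ∈ S) (hc : c ∈ S) :
    x * (a * b * c) - a * b * c * star x ∈ I := by
  have expand : x * (a * b * c) - a * b * c * star x =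
      (x * a * b + a * star x * b + a * b * x) * c -
        a * (star x * b * c + b * x * c + b * c * star x) := by
    noncomm_ring
  rw [expand]
  exact I.sub_mem (I.mul_mem_right _ _ (h.triple_mem hx ha hb))
    (I.mul_mem_left _ _ (h.triple_star_mem hx hb hc))

theorem mul_middle_mem_of_mem (h : SkewTripleIdentity N I S)
    (ha : a ∈ S) (hb : b ∈ S) (hx : x ∈ N) (hc : c ∈ S) (he : e ∈ S) :
    a * b * x * c * e ∈ I := by
  have triple := h.triple_star_mem hx hb hc
  have four := h.mul_mul_mul_mem ha hb hc he
  have comm_left := h.mul_triple_sub_triple_mul_star_mem hx ha hb hc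
  have comm_right := h.mul_triple_sub_triple_mul_star_mem (h.star_mem hx) hb hc he
  rw [star_star] at comm_right
  have expand : a * b * x * c * e =
      a * (star x * b * c + b * x * c + b * c * star x) * e
        - a * (star x * (b * c * e) - b * c * e * x)
        + (x * (a * b * c) - a * b * c * star x) * e
        - (a * b * c * e * x + x * (a * b * c * e)) := by
    noncomm_ring
  rw [expand]
  exact I.sub_mem
    (I.add_mem
      (I.sub_mem (I.mul_mem_right _ _ (I.mul_mem_left _ _ triple)) (I.mul_mem_left _ _ comm_right))
      (I.mul_mem_right _ _ comm_left))
    (I.add_mem (I.mul_mem_right _ _ four) (I.mul_mem_left _ _ four))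

theorem mul_middle_mem (h : SkewTripleIdentity N I S)
    (ha : a ∈ S) (hb : b ∈ S) (v : R) (hc : c ∈ S) (he : e ∈ S) : a * b * v * c * e ∈ I := by
  obtain ⟨z, hz, hvz⟩ := h.exists_center_sub_mem v
  have central : a * b * z = z * (a * b) := Subring.mem_center_iff.mp hz (a * b)
  have split : a * b * v * c * e = z * (a * b * c * e) + a * b * (v - z) * c * e := by
    rw [mul_sub, central]
    noncomm_ring
  rw [split]
  exact I.add_mem (I.mul_mem_left _ _ (h.mul_mul_mul_mem ha hb hc he))
    (h.mul_middle_mem_of_mem ha hb hvz hc he)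

theorem exists_sandwich_sub_mem (h : SkewTripleIdentity N I S) (x : R) :
    ∃ y y' : R, ∀ s ∈ S, ∀ t ∈ S, s * x * t - (y * s * t + s * t * y') ∈ I := by
  obtain ⟨z, hz, hxz⟩ := h.exists_center_sub_mem x
  refine ⟨z - star (x - z), -star (x - z), fun s hs t ht ↦ ?_⟩
  have central : s * z = z * s := Subring.mem_center_iff.mp hz s
  convert h.triple_star_mem hxz hs ht using 1
  rw [mul_sub s x z, central]
  noncomm_ring

theorem mul_middle_right_mem (h : SkewTripleIdentity N I S)
    (ha : a ∈ S) (hb : b ∈ S) (v : R) (hc : c ∈ S) (w : R) (he : e ∈ S) :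
    a * b * v * c * w * e ∈ I := by
  obtain ⟨y, y', hy⟩ := h.exists_sandwich_sub_mem w
  have expand : a * b * v * c * w * e =
      a * b * v * (c * w * e - (y * c * e + c * e * y'))
        + a * b * (v * y) * c * e + a * b * v * c * e * y' := by
    noncomm_ring
  rw [expand]
  exact I.add_mem
    (I.add_mem (I.mul_mem_left _ _ (hy c hc e he)) (h.mul_middle_mem ha hb _ hc he))
    (I.mul_mem_right _ _ (h.mul_middle_mem ha hb v hc he))

theorem mul_left_middle_right_mem (h : SkewTripleIdentity N I S)
    (ha : a ∈ S) (u : R) (hb : b ∈ S) (v : R) (hc : c ∈ S) (w : R) (he : e ∈ S) :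
    a * u * b * v * c * w * e ∈ I := by
  obtain ⟨y, y', hy⟩ := h.exists_sandwich_sub_mem u
  have expand : a * u * b * v * c * w * e =
      (a * u * b - (y * a * b + a * b * y')) * (v * c * w * e)
        + y * (a * b * v * c * w * e) + a * b * (y' * v) * c * w * e := by
    noncomm_ring
  rw [expand]
  exact I.add_mem
    (I.add_mem (I.mul_mem_right _ _ (hy a ha b hb))
      (I.mul_mem_left _ _ (h.mul_middle_right_mem ha hb v hc w he)))
    (h.mul_middle_right_mem ha hb _ hc w he)

end SkewTripleIdentity

theorem tp_mul (x y : FA F d) : tp F d (x * y) = tp F d y * tp F d x := by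
  simp [tp]

theorem tp_add (x y : FA F d) : tp F d (x + y) = tp F d x + tp F d y := by
  simp [tp]

theorem tp_sub (x y : FA F d) : tp F d (x - y) = tp F d x - tp F d y := by
  simp [tp]

theorem tp_algebraMap (r : F) : tp F d (algebraMap F (FA F d) r) = algebraMap F (FA F d) r := by
  simp [tp]

theorem tp_iota (p : Ltr d) : tp F d (ι F p) = ι F (p.1, !p.2) := by
  simp [tp]

theorem tp_tp (x : FA F d) : tp F d (tp F d x) = x := by
  induction x using FreeAlgebra.induction with
  | grade0 r => rw [tp_algebraMap, tp_algebraMap]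
  | grade1 p => rw [tp_iota, tp_iota, Bool.not_not]
  | mul x y hx hy => rw [tp_mul, tp_mul, hx, hy]
  | add x y hx hy => rw [tp_add, tp_add, hx, hy]

/-- The transpose as an involution. It is not an instance: Mathlib's own star on a free algebra
reverses words without exchanging `x` and `xᵀ`. -/
abbrev tpStarRing : StarRing (FA F d) where
  star := tp F d
  star_involutive := tp_tp F d
  star_mul := tp_mul F d
  star_add := tp_add F d

theorem algebraMapInv_tp (x : FA F d) : algebraMapInv (tp F d x) = algebraMapInv x := by
  induction x using FreeAlgebra.induction with
  | grade0 r => rw [tp_algebraMap]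
  | grade1 p => simp [tp_iota, algebraMapInv]
  | mul x y hx hy => rw [tp_mul, map_mul, map_mul, hx, hy, mul_comm]
  | add x y hx hy => rw [tp_add, map_add, map_add, hx, hy]

theorem bar_sub_algebraMap (x : FA F d) (r : F) :
    bar F d (x - algebraMap F (FA F d) r) = bar F d x := by
  rw [bar, tp_sub, tp_algebraMap, sub_sub_sub_cancel_right, bar]

theorem tp_bar (x : FA F d) : tp F d (bar F d x) = -bar F d x := by
  rw [bar, tp_sub, tp_tp, neg_sub]

theorem mul_mem_MFsub {x y : FA F d} (hx : x ∈ MFsub F d) (hy : y ∈ MFsub F d) :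
    x * y ∈ MFsub F d := by
  have hxy : x * y ∈ MFsub F d * MFsub F d := Submodule.mul_mem_mul hx hy
  rw [MFsub, Submodule.span_mul_span] at hxy
  refine Submodule.span_mono ?_ hxy
  rintro _ ⟨_, ⟨l, hl, rfl⟩, _, ⟨m, -, rfl⟩, rfl⟩
  exact ⟨l ++ m, by simp [hl], by simp [wordOf]⟩

theorem iota_mem_MFsub (p : Ltr d) : ι F p ∈ MFsub F d :=
  Submodule.subset_span ⟨[p], by simp, by simp [wordOf]⟩

theorem sub_algebraMapInv_mem_MFsub (x : FA F d) :
    x - algebraMap F (FA F d) (algebraMapInv x) ∈ MFsub F d := by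
  induction x using FreeAlgebra.induction with
  | grade0 r => simp [algebraMapInv]
  | grade1 p => simpa [algebraMapInv] using iota_mem_MFsub F d p
  | mul x y hx hy =>
    set r := algebraMapInv x
    set s := algebraMapInv y
    have expand : x * y - algebraMap F (FA F d) (algebraMapInv (x * y)) =
        (x - algebraMap F _ r) * (y - algebraMap F _ s)
          + r • (y - algebraMap F _ s) + s • (x - algebraMap F _ r) := by
      simp only [map_mul, Algebra.smul_def, Algebra.commutes s (x - algebraMap F _ r)]
      noncomm_ring
    rw [expand]
    exact add_mem (add_mem (mul_mem_MFsub F d hx hy) (Submodule.smul_mem _ r hy))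
      (Submodule.smul_mem _ s hx)
  | add x y hx hy => simpa only [map_add, add_sub_add_comm] using add_mem hx hy

theorem Trel_mem_of_MFsub {I : TwoSidedIdeal (FA F d)}
    (hI : ∀ x ∈ MFsub F d, ∀ y ∈ MFsub F d, ∀ z ∈ MFsub F d, Trel F d x y z ∈ I)
    {x : FA F d} (hx : x ∈ MFsub F d) (y z : FA F d) : Trel F d x y z ∈ I := by
  simpa only [Trel, bar_sub_algebraMap] using
    hI x hx _ (sub_algebraMapInv_mem_MFsub F d y) _ (sub_algebraMapInv_mem_MFsub F d z)

theorem skewTripleIdentity_range_bar {I : TwoSidedIdeal (FA F d)}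
    (hI : ∀ x ∈ MFsub F d, ∀ y ∈ MFsub F d, ∀ z ∈ MFsub F d, Trel F d x y z ∈ I) :
    letI := tpStarRing F d
    SkewTripleIdentity
      (TwoSidedIdeal.ker (algebraMapInv : FA F d →ₐ[F] F)) I (Set.range (bar F d)) :=
  letI := tpStarRing F d
  { exists_center_sub_mem x := by
      refine ⟨algebraMap F _ (algebraMapInv x), ?_, ?_⟩
      · exact Subring.mem_center_iff.mpr fun y ↦ (Algebra.commutes _ y).symm
      · rw [TwoSidedIdeal.mem_ker, map_sub, algebraMap_leftInverse _, sub_self]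
    star_mem {x} hx := by
      rw [TwoSidedIdeal.mem_ker] at hx ⊢
      exact (algebraMapInv_tp F d x).trans hx
    mem_of_mem := by
      rintro _ ⟨y, rfl⟩
      rw [TwoSidedIdeal.mem_ker, bar, map_sub, algebraMapInv_tp, sub_self]
    star_eq_neg := by
      rintro _ ⟨y, rfl⟩
      exact tp_bar F d y
    triple_mem := by
      rintro x _ _ hx ⟨y, rfl⟩ ⟨z, rfl⟩
      rw [TwoSidedIdeal.mem_ker] at hx
      have hx' : x ∈ MFsub F d := by
        simpa only [hx, map_zero, sub_zero] using sub_algebraMapInv_mem_MFsub F d x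
      exact Trel_mem_of_MFsub F d hI hx' y z }

theorem Trel_mem_idealA (x : FA F d) (hx : x ∈ MFsub F d) (y : FA F d) (hy : y ∈ MFsub F d)
    (z : FA F d) (hz : z ∈ MFsub F d) : Trel F d x y z ∈ idealA F d :=
  TwoSidedIdeal.subset_span (Or.inr ⟨x, hx, y, hy, z, hz, rfl⟩)

theorem stmt10_general {I : TwoSidedIdeal (FA F d)}
    (hI : ∀ x ∈ MFsub F d, ∀ y ∈ MFsub F d, ∀ z ∈ MFsub F d, Trel F d x y z ∈ I)
    (a b c e u v w : FA F d) :
    bar F d a * u * bar F d b * v * bar F d c * w * bar F d e ∈ I :=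
  letI := tpStarRing F d
  (skewTripleIdentity_range_bar F d hI).mul_left_middle_right_mem
    ⟨a, rfl⟩ u ⟨b, rfl⟩ v ⟨c, rfl⟩ w ⟨e, rfl⟩

/-- `ā u b̄ v c̄ w ē = 0` in `A_{3,d}` for all words `a, b, c, e ∈ M` and all
`u, v, w ∈ M₁`. -/
theorem stmt10 (F : Type) [Field F] [Infinite F] (h2 : ringChar F ≠ 2) (d : ℕ)
    (a b c e : List (Ltr d)) (ha : a ≠ []) (hb : b ≠ []) (hc : c ≠ []) (he : e ≠ [])
    (u v w : List (Ltr d)) :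
    bar F d (wordOf F d a) * wordOf F d u * bar F d (wordOf F d b) * wordOf F d v *
      bar F d (wordOf F d c) * wordOf F d w * bar F d (wordOf F d e) ∈ idealA F d :=
  stmt10_general F d (Trel_mem_idealA F d) _ _ _ _ _ _ _
end
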